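/- arXiv:1607.06573 — 6 statements merged into one kernel-verified Lean document; each statement's English description precedes it below -/
import Mathlib

section
/- Let m ≥ 14 be an integer with m ≡ 2 (mod 12). Then P_m is not almost universal; that is, the set of natural numbers n for which there exist no integers x, y, z with p_m(x) + p_m(y) + p_m(z) = n is infinite. -/
/-- The `x`-th generalized `m`-gonal number, `p_m(x) = ((m-2)x² - (m-4)x)/2`
(the division is exact). -/
def pm (m x : ℤ) : ℤ := ((m - 2) * x ^ 2 - (m - 4) * x) / 2

/-!
Write `m = 12k + 2` and let `p = 6k - 1 + 4kt` be a prime other than `3`, with `3 ∤ t`. Then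
`n = t(6k - 1 + 2kt)` is not a sum of three generalized `m`-gonal numbers. Indeed,
`p_m(x) + p_m(y) + p_m(z)` depends only on `s = x + y + z` and on the norm `N = a² + ab + b²`,
where `a = x - y` and `b = y - z`. Setting it equal to `n` gives `(t + s) B = 4kN` with
`B = 6k - 1 + 2k(t - s)` and `B + 2k(t + s) = p`. As `3 ∤ t`, both `t + s` and `B` are positive,
so `0 < B < p`. Since `B` is odd and `p` is prime, `B` is coprime to `4k(t + s)`, hence
`t + s = 4kC` and `N = BC` with `B`, `C` coprime. A prime `≡ 2 (mod 3)` divides a norm to an even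
power, so neither `B` nor `C` is `≡ 2 (mod 3)`, whereas the congruences modulo `3` force one of
them to be. By Dirichlet's theorem there are infinitely many such `p`.
-/

section FiniteField

variable {K : Type*} [Field K] [Fintype K]

theorem pow_three_injective_of_card_mod_three (hK : Fintype.card K % 3 = 2) :
    Function.Injective fun x : K => x ^ 3 := by
  obtain ⟨j, hj⟩ : ∃ j, Fintype.card K = 3 * j + 2 := ⟨Fintype.card K / 3, by omega⟩
  -- Cubing is inverted by the power `2j + 1`, as `3(2j + 1) = 2|K| - 1`.
  refine Function.LeftInverse.injective (g := fun y => y ^ (2 * j + 1)) fun x => ?_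
  have hx : x ^ (3 * j + 2) = x := hj ▸ FiniteField.pow_card x
  calc (x ^ 3) ^ (2 * j + 1) = x ^ (3 * j + 2) * x ^ (3 * j + 1) := by ring
    _ = x * x ^ (3 * j + 1) := by rw [hx]
    _ = x ^ (3 * j + 2) := by ring
    _ = x := hx

theorem three_ne_zero_of_card_mod_three (hK : Fintype.card K % 3 = 2) : (3 : K) ≠ 0 := by
  intro h3
  obtain ⟨j, hj⟩ : ∃ j, Fintype.card K = 3 * j + 2 := ⟨Fintype.card K / 3, by omega⟩
  have hcard : ((3 * j + 2 : ℕ) : K) = 0 := hj ▸ Nat.cast_card_eq_zero K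
  push_cast at hcard
  exact one_ne_zero (α := K) (by linear_combination (1 + (j : K)) * h3 - hcard)

theorem eq_zero_of_sq_add_mul_add_sq_eq_zero (hK : Fintype.card K % 3 = 2) {a b : K}
    (h : a ^ 2 + a * b + b ^ 2 = 0) : a = 0 ∧ b = 0 := by
  have hab : a = b :=
    pow_three_injective_of_card_mod_three hK (by linear_combination (a - b) * h)
  subst hab
  have ha : 3 * a ^ 2 = 0 := by linear_combination h
  simpa [three_ne_zero_of_card_mod_three hK] using ha

end FiniteField

/-- Loeschian numbers: the values of `a² + ab + b²` at integers, that is, the norms from the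
ring of Eisenstein integers. -/
def IsLoeschian (n : ℤ) : Prop := ∃ a b : ℤ, n = a ^ 2 + a * b + b ^ 2

namespace IsLoeschian

theorem nonneg {n : ℤ} (hn : IsLoeschian n) : 0 ≤ n := by
  obtain ⟨a, b, rfl⟩ := hn
  nlinarith [sq_nonneg (a + b), sq_nonneg a, sq_nonneg b]

theorem exists_eq_sq_mul {n : ℤ} (hn : IsLoeschian n) {q : ℕ} (hq : q.Prime) (hq3 : q % 3 = 2)
    (hqn : (q : ℤ) ∣ n) : ∃ n', IsLoeschian n' ∧ n = (q : ℤ) ^ 2 * n' := by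
  obtain ⟨a, b, rfl⟩ := hn
  have : Fact q.Prime := ⟨hq⟩
  have hzero : (a : ZMod q) ^ 2 + a * b + (b : ZMod q) ^ 2 = 0 := by
    exact_mod_cast (ZMod.intCast_zmod_eq_zero_iff_dvd _ q).mpr hqn
  obtain ⟨ha, hb⟩ := eq_zero_of_sq_add_mul_add_sq_eq_zero (by rwa [ZMod.card]) hzero
  obtain ⟨a', rfl⟩ := (ZMod.intCast_zmod_eq_zero_iff_dvd a q).mp ha
  obtain ⟨b', rfl⟩ := (ZMod.intCast_zmod_eq_zero_iff_dvd b q).mp hb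
  exact ⟨_, ⟨a', b', rfl⟩, by ring⟩

end IsLoeschian

theorem exists_prime_dvd_of_mod_three_eq_two {n : ℕ} (hn : n % 3 = 2) :
    ∃ q : ℕ, q.Prime ∧ q % 3 = 2 ∧ q ∣ n := by
  induction n using induction_on_primes with
  | zero => omega
  | one => omega
  | prime_mul q n hq ih =>
    by_cases hq3 : q % 3 = 2
    · exact ⟨q, hq, hq3, dvd_mul_right q n⟩
    · have hn3 : n % 3 = 2 := by
        rw [Nat.mul_mod] at hn
        obtain h | h : q % 3 = 0 ∨ q % 3 = 1 := by omega
        all_goals rw [h] at hn; omega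
      obtain ⟨r, hr, hr3, hrn⟩ := ih hn3
      exact ⟨r, hr, hr3, hrn.mul_left q⟩

theorem IsLoeschian.emod_three_ne_two_of_isCoprime {u v : ℤ} (huv : IsLoeschian (u * v))
    (hu : 0 ≤ u) (hco : IsCoprime u v) : u % 3 ≠ 2 := by
  lift u to ℕ using hu
  induction u using Nat.strong_induction_on with
  | _ u ih =>
    intro hu3
    obtain ⟨q, hq, hq3, hqu⟩ := exists_prime_dvd_of_mod_three_eq_two (n := u) (by omega)
    obtain ⟨n, hn, huvn⟩ :=
      huv.exists_eq_sq_mul hq hq3 ((Int.natCast_dvd_natCast.mpr hqu).mul_right v)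
    have hqv : IsCoprime ((q : ℤ) ^ 2) v :=
      (hco.of_isCoprime_of_dvd_left (Int.natCast_dvd_natCast.mpr hqu)).pow_left
    obtain ⟨w, rfl⟩ : q ^ 2 ∣ u := by
      exact_mod_cast hqv.dvd_of_dvd_mul_right (Dvd.intro _ huvn.symm)
    have hw3 : w % 3 = 2 := by
      have hq2 : q ^ 2 % 3 = 1 := by simp [Nat.pow_mod, hq3]
      have huw : q ^ 2 * w % 3 = 2 := by omega
      simpa [Nat.mul_mod, hq2] using huw
    have hwu : w < q ^ 2 * w :=
      lt_mul_of_one_lt_left (by omega) (Nat.one_lt_pow two_ne_zero hq.one_lt)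
    push_cast at huvn hco
    have hwv : (w : ℤ) * v = n :=
      mul_left_cancel₀ (pow_ne_zero 2 (Int.natCast_ne_zero.mpr hq.ne_zero))
        (by rw [← huvn, mul_assoc])
    exact ih w hwu (hwv ▸ hn) hco.of_mul_left_right (by omega)

theorem two_mul_pm (m x : ℤ) : 2 * pm m x = (m - 2) * x ^ 2 - (m - 4) * x := by
  refine Int.mul_ediv_cancel' ?_
  have hx : 2 ∣ x * (x - 1) := (Int.even_mul_pred_self x).two_dvd
  rw [show (m - 2) * x ^ 2 - (m - 4) * x = (m - 2) * (x * (x - 1)) + 2 * x by ring]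
  exact (hx.mul_left _).add (dvd_mul_right 2 x)

theorem exists_isLoeschian_six_mul_pm_sum (m x y z : ℤ) :
    ∃ s N, IsLoeschian N ∧ N ≡ s ^ 2 [ZMOD 3] ∧
      6 * (pm m x + pm m y + pm m z) = (m - 2) * (s ^ 2 + 2 * N) - 3 * (m - 4) * s := by
  refine ⟨x + y + z, _, ⟨x - y, y - z, rfl⟩, ?_, ?_⟩
  · exact Int.modEq_iff_dvd.mpr ⟨x * y + y * z + z * x, by ring⟩
  · linear_combination 3 * (two_mul_pm m x + two_mul_pm m y + two_mul_pm m z)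

theorem exists_isCoprime_mul_eq_of_add_mul_eq_prime {p d A B N : ℤ} (hp : Prime p) (hd : 0 < d)
    (hA : 0 < A) (hB : 0 < B) (hBodd : Odd B) (hadd : B + d * A = p) (hmul : A * B = 2 * d * N) :
    ∃ C, A = 2 * d * C ∧ B * C = N ∧ IsCoprime B C := by
  have hBp : IsCoprime B p := by
    refine (hp.coprime_iff_not_dvd.mpr fun hpB => ?_).symm
    nlinarith [Int.le_of_dvd hB hpB, mul_pos hd hA]
  have hBdA : IsCoprime B (d * A) := by
    rw [← hadd] at hBp
    simpa using hBp.add_mul_left_right (-1)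
  have hB2d : IsCoprime B (2 * d) :=
    (Int.isCoprime_two_right.mpr hBodd).mul_right hBdA.of_mul_right_left
  obtain ⟨C, rfl⟩ : 2 * d ∣ A := hB2d.symm.dvd_of_dvd_mul_right ⟨N, hmul⟩
  refine ⟨C, rfl, ?_, hBdA.of_mul_right_right.of_mul_right_right⟩
  exact mul_left_cancel₀ (by positivity : 2 * d ≠ 0) (by linear_combination hmul)

theorem eq_two_or_eq_two_of_mul_eq_sq {k t s B C : ZMod 3} (ht : t ≠ 0) (hkt : k * t ≠ 1)
    (hB : B = 2 * k * (t - s) - 1) (hC : t + s = k * C) (hBC : B * C = s ^ 2) :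
    B = 2 ∨ C = 2 := by
  have h3 : (3 : ZMod 3) = 0 := rfl
  rcases eq_or_ne k 0 with rfl | hk
  · exact Or.inl (by linear_combination hB - h3)
  · have eq_two : ∀ u : ZMod 3, u ≠ 0 → u ≠ 1 → u = 2 := by decide
    have hkt2 : k * t = 2 := eq_two _ (mul_ne_zero hk ht) hkt
    have hk2 : k ^ 2 = 1 := ZMod.pow_card_sub_one_eq_one hk
    have hBs : B = k * s := by linear_combination hB + 2 * hkt2 + (1 - k * s) * h3
    have hCs : C = 2 + k * s := by linear_combination (-k) * hC + hkt2 - C * hk2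
    have hks : k * s = 0 := by
      rw [hBs, hCs] at hBC
      linear_combination -hBC + s ^ 2 * hk2 + k * s * h3
    exact Or.inr (by rw [hCs, hks, add_zero])

theorem emod_three_eq_two_or {k t s B C : ℤ} (ht : ¬ 3 ∣ t) (hkt : ¬ k * t ≡ 1 [ZMOD 3])
    (hB : B = 6 * k - 1 + 2 * k * (t - s)) (hC : t + s = 4 * k * C)
    (hBC : B * C ≡ s ^ 2 [ZMOD 3]) : B % 3 = 2 ∨ C % 3 = 2 := by
  have h3 : (3 : ZMod 3) = 0 := rfl
  have ht' : (t : ZMod 3) ≠ 0 := fun h => ht ((ZMod.intCast_zmod_eq_zero_iff_dvd t 3).mp h)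
  have hkt' : (k * t : ZMod 3) ≠ 1 := fun h =>
    hkt ((ZMod.intCast_eq_intCast_iff _ _ 3).mp (by exact_mod_cast h))
  have hB' : (B : ZMod 3) = 2 * k * (t - s) - 1 := by
    rw [hB]; push_cast; linear_combination 2 * (k : ZMod 3) * h3
  have hC' : (t + s : ZMod 3) = k * C := by
    have hcast : (t + s : ZMod 3) = 4 * k * C := by exact_mod_cast congrArg Int.cast hC
    linear_combination hcast + (k : ZMod 3) * C * h3
  have hBC' : (B * C : ZMod 3) = s ^ 2 := by
    exact_mod_cast (ZMod.intCast_eq_intCast_iff _ _ 3).mpr hBC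
  exact (eq_two_or_eq_two_of_mul_eq_sq ht' hkt' hB' hC' hBC').imp
    (ZMod.intCast_eq_intCast_iff B 2 3).mp (ZMod.intCast_eq_intCast_iff C 2 3).mp

theorem pm_sum_ne_of_prime {k t : ℤ} {p : ℕ} (hk : 0 < k) (ht : ¬ 3 ∣ t) (hp : p.Prime)
    (hp3 : p ≠ 3) (hpt : (p : ℤ) = 6 * k - 1 + 4 * k * t) (x y z : ℤ) :
    pm (12 * k + 2) x + pm (12 * k + 2) y + pm (12 * k + 2) z ≠ t * (6 * k - 1 + 2 * k * t) := by
  intro hrep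
  obtain ⟨s, N, hN, hNs, hsum⟩ := exists_isLoeschian_six_mul_pm_sum (12 * k + 2) x y z
  obtain ⟨B, hB⟩ : ∃ B, B = 6 * k - 1 + 2 * k * (t - s) := ⟨_, rfl⟩
  have hadd : B + 2 * k * (t + s) = p := by rw [hB, hpt]; ring
  have hmul : (t + s) * B = 2 * (2 * k) * N := by rw [hB]; linarith
  have hBodd : Odd B := ⟨3 * k + k * (t - s) - 1, by rw [hB]; ring⟩
  have hN0 : N ≠ 0 := by
    rintro rfl
    have hB0 : B ≠ 0 := fun h => by simp [h] at hBodd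
    have hts : t + s = 0 := by simpa [hB0] using hmul
    have hs : 3 ∣ s := Int.prime_three.dvd_of_dvd_pow (Int.modEq_zero_iff_dvd.mp hNs.symm)
    exact ht ((Int.dvd_add_left hs).mp (hts ▸ dvd_zero 3))
  have hpos : 0 < (t + s) * B := by
    have hNpos : 0 < N := hN.nonneg.lt_of_ne' hN0
    rw [hmul]; positivity
  obtain ⟨hA, hBpos⟩ : 0 < t + s ∧ 0 < B := by
    refine (pos_and_pos_or_neg_and_neg_of_mul_pos hpos).resolve_right fun hneg => ?_
    have hp0 : (0 : ℤ) < p := by exact_mod_cast hp.pos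
    nlinarith [mul_neg_of_pos_of_neg hk hneg.1]
  obtain ⟨C, hC, rfl, hco⟩ := exists_isCoprime_mul_eq_of_add_mul_eq_prime
    (Nat.prime_iff_prime_int.mp hp) (by positivity) hA hBpos hBodd hadd hmul
  have hkt : ¬ k * t ≡ 1 [ZMOD 3] := by
    intro h
    have h3p : (3 : ℤ) ∣ p := by rw [hpt, mul_assoc]; have := h.dvd; omega
    exact hp3 ((Nat.prime_dvd_prime_iff_eq Nat.prime_three hp).mp (by exact_mod_cast h3p)).symm
  have hCpos : 0 ≤ C := (pos_of_mul_pos_right (hC ▸ hA) (by positivity)).le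
  rcases emod_three_eq_two_or ht hkt hB (by linear_combination hC) hNs with hB3 | hC3
  · exact hN.emod_three_ne_two_of_isCoprime hBpos.le hco hB3
  · exact (mul_comm B C ▸ hN).emod_three_ne_two_of_isCoprime hCpos hco.symm hC3

theorem isCoprime_two_mul_mul_sub_one {k r : ℤ} (hr : ¬ k * r ≡ 2 [ZMOD 3]) :
    IsCoprime (2 * k * r - 1) (12 * k) := by
  have h2k : IsCoprime (2 * k * r - 1) (2 * k) := ⟨-1, r, by ring⟩
  have h3 : IsCoprime (2 * k * r - 1) 3 := by
    refine (Int.prime_three.coprime_iff_not_dvd.mpr fun h => hr ?_).symm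
    rw [mul_assoc] at h
    unfold Int.ModEq
    omega
  rw [show 12 * k = 3 * (2 * (2 * k)) by ring]
  exact h3.mul_right (h2k.of_mul_right_left.mul_right h2k)

theorem exists_prime_eq_add_mul_gt {k : ℤ} (hk : 0 < k) (M : ℕ) :
    ∃ t : ℤ, ∃ p : ℕ, M < t ∧ ¬ 3 ∣ t ∧ p.Prime ∧ p ≠ 3 ∧ (p : ℤ) = 6 * k - 1 + 4 * k * t := by
  obtain ⟨ε, hε, hkε⟩ : ∃ ε : ℤ, ¬ 3 ∣ ε ∧ ¬ k * (2 * ε + 3) ≡ 2 [ZMOD 3] := by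
    by_cases h : k % 3 = 1
    · exact ⟨2, by norm_num, fun h' => by unfold Int.ModEq at h'; omega⟩
    · exact ⟨1, by norm_num, fun h' => by unfold Int.ModEq at h'; omega⟩
  lift k to ℕ using hk.le
  obtain ⟨p, hpgt, hp, hmod⟩ := Nat.forall_exists_prime_gt_and_zmodEq (2 * k * (2 * M + 3))
    (q := 12 * k) (by omega) (by exact_mod_cast isCoprime_two_mul_mul_sub_one hkε)
  obtain ⟨j, hj⟩ := hmod.symm.dvd
  push_cast at hj
  have hpt : (p : ℤ) = 6 * k - 1 + 4 * k * (ε + 3 * j) := by linear_combination hj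
  refine ⟨ε + 3 * j, p, ?_, by omega, hp, ?_, hpt⟩
  · zify at hpgt
    nlinarith
  · exact ne_of_gt (by nlinarith)

theorem not_almost_universal_of_two_mod_twelve
    (m : ℤ) (hm : 14 ≤ m) (h12 : m % 12 = 2) :
    {n : ℕ | ¬ ∃ x y z : ℤ, pm m x + pm m y + pm m z = (n : ℤ)}.Infinite := by
  obtain ⟨k, hk, rfl⟩ : ∃ k : ℤ, 0 < k ∧ m = 12 * k + 2 := ⟨m / 12, by omega, by omega⟩
  refine Set.infinite_of_forall_exists_gt fun M => ?_
  obtain ⟨t, p, hMt, ht, hp, hp3, hpt⟩ := exists_prime_eq_add_mul_gt hk M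
  have hlt : (M : ℤ) < t * (6 * k - 1 + 2 * k * t) := by
    have ht0 : 0 < t := by omega
    nlinarith [mul_pos hk ht0]
  obtain ⟨n, hn⟩ := Int.eq_ofNat_of_zero_le (Int.natCast_nonneg M |>.trans hlt.le)
  refine ⟨n, ?_, by omega⟩
  rintro ⟨x, y, z, hxyz⟩
  exact pm_sum_ne_of_prime hk ht hp hp3 hpt x y z (hxyz.trans hn.symm)
end

section
/- Let m ≥ 4 be an integer with m ≡ 0 (mod 4). Then P_m is not almost universal; that is, the set of natural numbers n for which there exist no integers x, y, z with p_m(x) + p_m(y) + p_m(z) = n is infinite. -/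
/-!
Since `p_m(x) = x² + (m - 4) x(x - 1)/2`, the residue of `p_m(x)` modulo `8` depends on `m` only
modulo `8`, so for `4 ∣ m` it suffices to look at `p_4` and `p_8`. The values of `p_4` are the
squares, and `3 p_8(x) + 1 = (3x - 1)²`. As a sum of three squares is never `7` modulo `8`, sums of
three values of `p_4` miss the class of `7`, and those of `p_8` miss the class of `4`.
-/

theorem pm_eq_sq_add (m x : ℤ) : pm m x = x ^ 2 + (m - 4) * (x * (x - 1) / 2) := by
  have half : x * (x - 1) / 2 * 2 = x * (x - 1) :=
    Int.ediv_mul_cancel (Int.even_mul_pred_self x).two_dvd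
  refine Int.ediv_eq_of_eq_mul_left two_ne_zero ?_
  linear_combination -(m - 4) * half

theorem pm_modEq {m m' d : ℤ} (h : m ≡ m' [ZMOD d]) (x : ℤ) : pm m x ≡ pm m' x [ZMOD d] := by
  simp only [pm_eq_sq_add]
  gcongr

theorem pm_four (x : ℤ) : pm 4 x = x ^ 2 := by
  simp [pm_eq_sq_add]

theorem three_mul_pm_eight_add_one (x : ℤ) : 3 * pm 8 x + 1 = (3 * x - 1) ^ 2 := by
  have octagonal : pm 8 x = 3 * x ^ 2 - 2 * x :=
    Int.ediv_eq_of_eq_mul_left two_ne_zero (by ring)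
  linear_combination 3 * octagonal

theorem sq_add_sq_add_sq_not_modEq_seven (x y z : ℤ) : ¬ x ^ 2 + y ^ 2 + z ^ 2 ≡ 7 [ZMOD 8] := by
  have residues : ∀ a b c : ZMod 8, a ^ 2 + b ^ 2 + c ^ 2 ≠ 7 := by decide
  intro h
  exact residues x y z (by exact_mod_cast (ZMod.intCast_eq_intCast_iff _ _ 8).mpr h)

theorem pm_add_pm_add_pm_not_modEq_seven {m : ℤ} (hm : m ≡ 4 [ZMOD 8]) (x y z : ℤ) :
    ¬ pm m x + pm m y + pm m z ≡ 7 [ZMOD 8] := by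
  intro h
  have squares : pm m x + pm m y + pm m z ≡ x ^ 2 + y ^ 2 + z ^ 2 [ZMOD 8] := by
    simpa only [pm_four] using ((pm_modEq hm x).add (pm_modEq hm y)).add (pm_modEq hm z)
  exact sq_add_sq_add_sq_not_modEq_seven x y z (squares.symm.trans h)

theorem pm_add_pm_add_pm_not_modEq_four {m : ℤ} (hm : m ≡ 8 [ZMOD 8]) (x y z : ℤ) :
    ¬ pm m x + pm m y + pm m z ≡ 4 [ZMOD 8] := by
  intro h
  have octagonal : pm m x + pm m y + pm m z ≡ pm 8 x + pm 8 y + pm 8 z [ZMOD 8] :=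
    ((pm_modEq hm x).add (pm_modEq hm y)).add (pm_modEq hm z)
  refine sq_add_sq_add_sq_not_modEq_seven (3 * x - 1) (3 * y - 1) (3 * z - 1) ?_
  calc (3 * x - 1) ^ 2 + (3 * y - 1) ^ 2 + (3 * z - 1) ^ 2
      = 3 * (pm 8 x + pm 8 y + pm 8 z) + 3 := by
        simp only [← three_mul_pm_eight_add_one]
        ring
    _ ≡ 3 * 4 + 3 [ZMOD 8] := ((octagonal.symm.trans h).mul_left 3).add_right 3
    _ ≡ 7 [ZMOD 8] := by decide

theorem not_almost_universal_of_zero_mod_four_general {m : ℤ} (h4 : m % 4 = 0) :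
    ∃ r : ℕ, ∀ n : ℕ, n ≡ r [MOD 8] → ¬ ∃ x y z : ℤ, pm m x + pm m y + pm m z = (n : ℤ) := by
  have hm : m ≡ 4 [ZMOD 8] ∨ m ≡ 8 [ZMOD 8] := by
    simp only [Int.ModEq]
    omega
  rcases hm with hm | hm
  · refine ⟨7, fun n hn ⟨x, y, z, h⟩ => pm_add_pm_add_pm_not_modEq_seven hm x y z ?_⟩
    rw [h]
    exact Int.natCast_modEq_iff.mpr hn
  · refine ⟨4, fun n hn ⟨x, y, z, h⟩ => pm_add_pm_add_pm_not_modEq_four hm x y z ?_⟩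
    rw [h]
    exact Int.natCast_modEq_iff.mpr hn

theorem not_almost_universal_of_zero_mod_four
    (m : ℤ) (hm : 4 ≤ m) (h4 : m % 4 = 0) :
    {n : ℕ | ¬ ∃ x y z : ℤ, pm m x + pm m y + pm m z = (n : ℤ)}.Infinite := by
  obtain ⟨r, hr⟩ := not_almost_universal_of_zero_mod_four_general h4
  exact (Nat.frequently_atTop_iff_infinite.mp (Nat.frequently_modEq (by norm_num) r)).mono hr
end

section
/- Let m ≥ 8 be an integer with m ≡ 0 (mod 8). Then for all integers x, y, z, one has P_m(x,y,z) ≢ 4 (mod 8). In particular, P_m represents no integer congruent to 4 modulo 8. -/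
/-! Completing the square gives `p_m(x) = m * (x * (x - 1) / 2) + (1 - (x - 1)²)`. When `8 ∣ m`,
this makes `P_m(x, y, z)` congruent modulo `8` to `3` minus a sum of three squares, and a sum of
three squares is never congruent to `7` modulo `8`. -/

theorem pm_eq_mul_triangular_add_one_sub_sq (m x : ℤ) :
    pm m x = m * (x * (x - 1) / 2) + (1 - (x - 1) ^ 2) := by
  have two_mul_triangular : 2 * (x * (x - 1) / 2) = x * (x - 1) :=
    Int.mul_ediv_cancel' (Int.even_mul_pred_self x).two_dvd
  refine Int.ediv_eq_of_eq_mul_right two_ne_zero ?_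
  linear_combination -m * two_mul_triangular

theorem pm_modEq_one_sub_sq (m x : ℤ) : pm m x ≡ 1 - (x - 1) ^ 2 [ZMOD m] := by
  rw [pm_eq_mul_triangular_add_one_sub_sq]
  exact Int.modulus_mul_add_modEq_iff.mpr rfl

theorem not_sq_add_sq_add_sq_modEq_seven (a b c : ℤ) :
    ¬ a ^ 2 + b ^ 2 + c ^ 2 ≡ 7 [ZMOD 8] := by
  have ne_seven : ∀ r s t : ZMod 8, r ^ 2 + s ^ 2 + t ^ 2 ≠ 7 := by decide
  intro h
  exact ne_seven a b c (mod_cast (ZMod.intCast_eq_intCast_iff _ _ 8).mpr h)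

theorem no_four_mod_eight_of_zero_mod_eight
    (m : ℤ) (hm : 8 ≤ m) (h8 : m % 8 = 0) (x y z : ℤ) :
    (pm m x + pm m y + pm m z) % 8 ≠ 4 := by
  intro (hsum : pm m x + pm m y + pm m z ≡ 4 [ZMOD 8])
  have hpm (t : ℤ) : pm m t ≡ 1 - (t - 1) ^ 2 [ZMOD 8] :=
    (pm_modEq_one_sub_sq m t).of_dvd (Int.dvd_of_emod_eq_zero h8)
  refine not_sq_add_sq_add_sq_modEq_seven (x - 1) (y - 1) (z - 1) ?_
  calc (x - 1) ^ 2 + (y - 1) ^ 2 + (z - 1) ^ 2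
      = 3 - ((1 - (x - 1) ^ 2) + (1 - (y - 1) ^ 2) + (1 - (z - 1) ^ 2)) := by ring
    _ ≡ 3 - (pm m x + pm m y + pm m z) [ZMOD 8] :=
        (((hpm x).add (hpm y)).add (hpm z)).symm.sub_left 3
    _ ≡ 3 - 4 [ZMOD 8] := hsum.sub_left 3
    _ ≡ 7 [ZMOD 8] := rfl
end

section
/- Let ℓ be a prime with ℓ ≡ 1 (mod 12). Then there exist no integers X, Y, Z with X ≡ Y ≡ Z ≡ 5 (mod 12) and X² + Y² + Z² = 3ℓ². -/
/-!
Put `S = X + Y + Z`. Then `9 ℓ ^ 2 - S ^ 2 = 2 (a ^ 2 + a b + b ^ 2)` with `a = X - Y` and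
`b = Y - Z`. The congruences make `u = (3 ℓ - S) / 48` and `v = (3 ℓ + S) / 6` integers with
`8 u + v = ℓ`, and `u v` is the value of the same form at `(a / 12, b / 12)`. Modulo `3` one finds
`u ≡ -(ℓ + 1) ^ 2`, so `u ≡ 2`, and some prime `q ≡ 2 (mod 3)` divides `u` to an odd power. As `q`
is inert in the Eisenstein integers, it divides the norm `u v` to an even power. Hence `q` divides
`v` too, and therefore `ℓ`, which has no prime factor `≡ 2 (mod 3)`.
-/

theorem sq_add_mul_add_sq_nonneg {R : Type*} [CommRing R] [LinearOrder R] [IsStrictOrderedRing R]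
    (a b : R) : 0 ≤ a ^ 2 + a * b + b ^ 2 := by
  linarith [sq_nonneg a, sq_nonneg b, sq_nonneg (a + b)]

theorem three_mul_sum_sq_sub_sq_sum {R : Type*} [CommRing R] (x y z : R) :
    3 * (x ^ 2 + y ^ 2 + z ^ 2) - (x + y + z) ^ 2 =
      2 * ((x - y) ^ 2 + (x - y) * (y - z) + (y - z) ^ 2) := by
  ring

section FiniteField

variable {K : Type*} [Field K] [Fintype K]

theorem pow_left_injective_of_coprime_card_sub_one {n : ℕ} (hn : n ≠ 0)
    (hK : n.Coprime (Fintype.card K - 1)) : Function.Injective (fun x : K ↦ x ^ n) := by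
  intro a b (hab : a ^ n = b ^ n)
  rcases eq_or_ne b 0 with rfl | hb
  · exact (pow_eq_zero_iff hn).mp (hab.trans (zero_pow hn))
  have ha : a ≠ 0 := by
    rintro rfl
    exact pow_ne_zero n hb (hab.symm.trans (zero_pow hn))
  have hdiv_pow : (a / b) ^ n = 1 := by rw [div_pow, hab, div_self (pow_ne_zero n hb)]
  have hdiv_card : (a / b) ^ (Fintype.card K - 1) = 1 :=
    FiniteField.pow_card_sub_one_eq_one _ (div_ne_zero ha hb)
  have hdiv : a / b = 1 := by
    simpa [hK.gcd_eq_one] using pow_gcd_eq_one.mpr ⟨hdiv_pow, hdiv_card⟩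
  exact (div_eq_one_iff_eq hb).mp hdiv

theorem sq_add_mul_add_sq_eq_zero_iff_of_card_mod_three_eq_two (hK : Fintype.card K % 3 = 2)
    {a b : K} : a ^ 2 + a * b + b ^ 2 = 0 ↔ a = 0 ∧ b = 0 := by
  refine ⟨fun h ↦ ?_, by rintro ⟨rfl, rfl⟩; ring⟩
  have hcoprime : Nat.Coprime 3 (Fintype.card K - 1) :=
    (Nat.Prime.coprime_iff_not_dvd Nat.prime_three).mpr (by lia)
  have hcube : a ^ 3 = b ^ 3 := by linear_combination (a - b) * h
  obtain rfl : a = b := pow_left_injective_of_coprime_card_sub_one three_ne_zero hcoprime hcube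
  have hcard : (3 * (Fintype.card K / 3 : ℕ) + 2 : K) = 0 := by
    have := FiniteField.cast_card_eq_zero K
    rw [← Nat.div_add_mod (Fintype.card K) 3, hK] at this
    exact_mod_cast this
  have hsq : a ^ 2 = 0 := by
    linear_combination (1 + (Fintype.card K / 3 : ℕ)) * h - a ^ 2 * hcard
  simpa using hsq

end FiniteField

section PrimeTwoModThree

variable {q : ℕ} [Fact q.Prime]

theorem dvd_sq_add_mul_add_sq_iff (hq : q % 3 = 2) {a b : ℤ} :
    (q : ℤ) ∣ a ^ 2 + a * b + b ^ 2 ↔ (q : ℤ) ∣ a ∧ (q : ℤ) ∣ b := by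
  simp only [← ZMod.intCast_zmod_eq_zero_iff_dvd]
  push_cast
  exact sq_add_mul_add_sq_eq_zero_iff_of_card_mod_three_eq_two (by rwa [ZMod.card])

theorem even_padicValInt_sq_add_mul_add_sq (hq : q % 3 = 2) (a b : ℤ) :
    Even (padicValInt q (a ^ 2 + a * b + b ^ 2)) := by
  rcases Nat.eq_zero_or_pos (Int.gcd a b) with hgcd | hgcd
  · obtain ⟨rfl, rfl⟩ := Int.gcd_eq_zero_iff.mp hgcd
    simp
  obtain ⟨c, d, hcd, ha, hb⟩ := Int.exists_gcd_one hgcd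
  set g : ℤ := (Int.gcd a b : ℤ)
  have hg : g ≠ 0 := by positivity
  have hndvd : ¬ (q : ℤ) ∣ c ^ 2 + c * d + d ^ 2 := by
    rw [dvd_sq_add_mul_add_sq_iff hq]
    rintro ⟨hc, hd⟩
    exact (Nat.prime_iff_prime_int.mp Fact.out).not_isUnit
      ((Int.isCoprime_iff_gcd_eq_one.mpr hcd).isUnit_of_dvd' hc hd)
  have hne : c ^ 2 + c * d + d ^ 2 ≠ 0 := fun h ↦ hndvd (h ▸ dvd_zero _)
  have hfactor : a ^ 2 + a * b + b ^ 2 = g * g * (c ^ 2 + c * d + d ^ 2) := by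
    rw [ha, hb]; ring
  rw [hfactor, padicValInt.mul (mul_ne_zero hg hg) hne, padicValInt.mul hg hg,
    padicValInt.eq_zero_of_not_dvd hndvd, add_zero]
  exact Even.add_self _

theorem dvd_of_odd_padicValInt_of_mul_eq_sq_add_mul_add_sq (hq : q % 3 = 2) {u v a b : ℤ}
    (hu : Odd (padicValInt q u)) (huv : u * v = a ^ 2 + a * b + b ^ 2) : (q : ℤ) ∣ v := by
  by_contra hv
  have hu₀ : u ≠ 0 := by rintro rfl; simp at hu
  have hv₀ : v ≠ 0 := by rintro rfl; exact hv (dvd_zero _)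
  have heven := even_padicValInt_sq_add_mul_add_sq hq a b
  rw [← huv, padicValInt.mul hu₀ hv₀, padicValInt.eq_zero_of_not_dvd hv, add_zero] at heven
  exact Nat.not_even_iff_odd.mpr hu heven

end PrimeTwoModThree

theorem exists_prime_odd_padicValNat_of_mod_three_eq_two {n : ℕ} (hn : n % 3 = 2) :
    ∃ q : ℕ, q.Prime ∧ q % 3 = 2 ∧ Odd (padicValNat q n) := by
  by_contra! heven
  have hpow : ∀ p ∈ n.primeFactors, (p : ZMod 3) ^ n.factorization p = 1 := by
    intro p hp
    have hpp := Nat.prime_of_mem_primeFactors hp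
    have hpn := Nat.dvd_of_mem_primeFactors hp
    have hp₀ : p % 3 ≠ 0 := fun h ↦ by
      have := (Nat.dvd_of_mod_eq_zero h).trans hpn
      lia
    obtain h | h : p % 3 = 1 ∨ p % 3 = 2 := by lia
    · have : (p : ZMod 3) = 1 := by rw [← ZMod.natCast_mod, h, Nat.cast_one]
      rw [this, one_pow]
    · have : (p : ZMod 3) = -1 := by rw [← ZMod.natCast_mod, h]; rfl
      rw [this, Nat.factorization_def n hpp]
      exact (Nat.not_odd_iff_even.mp (heven p hpp h)).neg_one_pow
  have hn_one : (n : ZMod 3) = 1 := by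
    conv_lhs => rw [← Nat.prod_factorization_pow_eq_self (n := n) (by lia)]
    rw [Nat.prod_factorization_eq_prod_primeFactors, Nat.cast_prod]
    exact Finset.prod_eq_one fun p hp ↦ by rw [Nat.cast_pow, hpow p hp]
  have := (ZMod.natCast_eq_natCast_iff' n 1 3).mp (by exact_mod_cast hn_one)
  lia

theorem exists_prime_dvd_and_dvd_of_mul_eq_sq_add_mul_add_sq {u v a b : ℤ} (hu₀ : 0 ≤ u)
    (hu : u % 3 = 2) (huv : u * v = a ^ 2 + a * b + b ^ 2) :
    ∃ q : ℕ, q.Prime ∧ q % 3 = 2 ∧ (q : ℤ) ∣ u ∧ (q : ℤ) ∣ v := by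
  lift u to ℕ using hu₀
  obtain ⟨q, hq, hq₃, hodd⟩ := exists_prime_odd_padicValNat_of_mod_three_eq_two (by lia : u % 3 = 2)
  have : Fact q.Prime := ⟨hq⟩
  exact ⟨q, hq, hq₃, Int.natCast_dvd_natCast.mpr (dvd_of_one_le_padicValNat hodd.pos),
    dvd_of_odd_padicValInt_of_mul_eq_sq_add_mul_add_sq hq₃ (by rwa [padicValInt.of_nat]) huv⟩

theorem exists_mul_eq_sq_add_mul_add_sq_of_sum_sq {ℓ x y z : ℤ} (hℓ : ℓ % 4 = 1)
    (h : (12 * x + 5) ^ 2 + (12 * y + 5) ^ 2 + (12 * z + 5) ^ 2 = 3 * ℓ ^ 2) :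
    ∃ u v : ℤ, 8 * u + v = ℓ ∧ v - 8 * u = 4 * (x + y + z) + 5 ∧
      u * v = (x - y) ^ 2 + (x - y) * (y - z) + (y - z) ^ 2 := by
  obtain ⟨m, rfl⟩ : ∃ m, ℓ = 4 * m + 1 := ⟨ℓ / 4, by lia⟩
  set v : ℤ := 2 * m + 2 * (x + y + z) + 3 with hv
  have hprod : (m - (x + y + z) - 1) * v =
      2 ^ 2 * ((x - y) ^ 2 + (x - y) * (y - z) + (y - z) ^ 2) := by
    linarith [three_mul_sum_sq_sub_sq_sum (12 * x + 5) (12 * y + 5) (12 * z + 5)]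
  have hcoprime : IsCoprime ((2 : ℤ) ^ 2) v :=
    IsCoprime.pow_left ⟨-(m + (x + y + z) + 1), 1, by rw [hv]; ring⟩
  obtain ⟨u, hu⟩ : (2 : ℤ) ^ 2 ∣ m - (x + y + z) - 1 :=
    hcoprime.dvd_of_dvd_mul_right ⟨_, hprod⟩
  refine ⟨u, v, by linarith, by linarith, ?_⟩
  rw [hu] at hprod
  linarith

theorem emod_three_eq_two_of_mul_eq_sq_add_mul_add_sq {ℓ u v x y z : ℤ} (hℓ : ℓ % 3 ≠ 2)
    (hadd : 8 * u + v = ℓ) (hsub : v - 8 * u = 4 * (x + y + z) + 5)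
    (hmul : u * v = (x - y) ^ 2 + (x - y) * (y - z) + (y - z) ^ 2) : u % 3 = 2 := by
  have hmod : u ≡ -(ℓ + 1) ^ 2 [ZMOD 3] := by
    have hv : v ≡ ℓ + u [ZMOD 3] := by rw [Int.ModEq]; lia
    have hs : x + y + z ≡ ℓ - u + 1 [ZMOD 3] := by rw [Int.ModEq]; lia
    have hform : u * v ≡ (x + y + z) ^ 2 [ZMOD 3] :=
      Int.modEq_iff_dvd.mpr ⟨x * y + y * z + z * x, by linear_combination -hmul⟩
    have hquad : u * (ℓ + u) ≡ (ℓ - u + 1) ^ 2 [ZMOD 3] :=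
      (hv.mul_left u).symm.trans (hform.trans (hs.pow 2))
    obtain ⟨k, hk⟩ := hquad.dvd
    exact Int.modEq_iff_dvd.mpr ⟨-k - u * (ℓ + 1), by linear_combination -hk⟩
  have hsq : (ℓ + 1) ^ 2 ≡ 1 [ZMOD 3] := by
    obtain h | h : ℓ + 1 ≡ 1 [ZMOD 3] ∨ ℓ + 1 ≡ -1 [ZMOD 3] := by
      rw [Int.ModEq, Int.ModEq]
      lia
    · exact h.pow 2
    · exact h.pow 2
  exact hmod.trans hsq.neg

theorem no_solution_five_mod_twelve_general (ℓ : ℕ) (h4 : ℓ % 4 = 1)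
    (hℓ : ∀ q : ℕ, q.Prime → q ∣ ℓ → q % 3 ≠ 2) :
    ¬ ∃ X Y Z : ℤ, X % 12 = 5 ∧ Y % 12 = 5 ∧ Z % 12 = 5 ∧
      X ^ 2 + Y ^ 2 + Z ^ 2 = 3 * (ℓ : ℤ) ^ 2 := by
  rintro ⟨X, Y, Z, hX, hY, hZ, h⟩
  obtain ⟨x, rfl⟩ : ∃ x, X = 12 * x + 5 := ⟨X / 12, by lia⟩
  obtain ⟨y, rfl⟩ : ∃ y, Y = 12 * y + 5 := ⟨Y / 12, by lia⟩
  obtain ⟨z, rfl⟩ : ∃ z, Z = 12 * z + 5 := ⟨Z / 12, by lia⟩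
  obtain ⟨u, v, hadd, hsub, hmul⟩ :=
    exists_mul_eq_sq_add_mul_add_sq_of_sum_sq (ℓ := ℓ) (by lia) h
  have hℓ₃ : ℓ % 3 ≠ 2 := fun h₂ ↦ by
    obtain ⟨q, hq, hq₃, hodd⟩ := exists_prime_odd_padicValNat_of_mod_three_eq_two h₂
    exact hℓ q hq (dvd_of_one_le_padicValNat hodd.pos) hq₃
  have hu₃ : u % 3 = 2 := emod_three_eq_two_of_mul_eq_sq_add_mul_add_sq (by lia) hadd hsub hmul
  have hu₀ : 0 ≤ u := by
    by_contra! hneg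
    have hv : 0 < v := by lia
    exact (mul_neg_of_neg_of_pos hneg hv).not_ge (hmul ▸ sq_add_mul_add_sq_nonneg _ _)
  obtain ⟨q, hq, hq₃, hqu, hqv⟩ :=
    exists_prime_dvd_and_dvd_of_mul_eq_sq_add_mul_add_sq hu₀ hu₃ hmul
  have hqℓ : (q : ℤ) ∣ ℓ := hadd ▸ (hqu.mul_left 8).add hqv
  exact hℓ q hq (Int.natCast_dvd_natCast.mp hqℓ) hq₃

theorem no_solution_five_mod_twelve (ℓ : ℕ) (hℓ : ℓ.Prime) (h12 : ℓ % 12 = 1) :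
    ¬ ∃ X Y Z : ℤ, X % 12 = 5 ∧ Y % 12 = 5 ∧ Z % 12 = 5 ∧
      X ^ 2 + Y ^ 2 + Z ^ 2 = 3 * (ℓ : ℤ) ^ 2 :=
  no_solution_five_mod_twelve_general ℓ (by lia) fun q hq hqℓ ↦ by
    rw [(Nat.prime_dvd_prime_iff_eq hq hℓ).mp hqℓ]
    lia
end

section
/- Let ℓ be a prime with ℓ ≡ 7 (mod 12). Then there exist no integers X, Y, Z with X ≡ Y ≡ Z ≡ 1 (mod 12) and X² + Y² + Z² = 3ℓ². -/
/-!
Write `N(a, b) = a² + ab + b²`, and let `(X, Y, Z)` be a solution. With `X - Y = 12a` and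
`Y - Z = 12b`, the identity
`(3ℓ)² - (X + Y + Z)² = 3(X² + Y² + Z²) - (X + Y + Z)² = 2 · 12² · N(a, b)` becomes a
factorization `u * w = N(a, b)` with `ℓ = u + 8w` and `X + Y + Z = 3(8w - u)`. A prime
`p ≡ 2 (mod 3)` is inert in the Eisenstein integers, so it divides a value of `N` to an even power;
hence a nonnegative factor of `N(a, b)` can be `2` modulo `3` only if it shares such a prime with
its cofactor. The congruences modulo `3` force `u` or `w` to be `2` modulo `3`, and a common prime
factor of `u` and `w` which is `2` modulo `3` divides `a` and `b`, hence `ℓ`, `X`, `Y` and `Z`. If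
`ℓ` is prime, that factor is `ℓ` itself, contradicting `ℓ ≡ 1 (mod 3)`.
-/

section FiniteField

variable {F : Type*} [Field F] [Fintype F]

theorem pow_three_injective_of_card_mod_three_eq_two (hF : Fintype.card F % 3 = 2) :
    Function.Injective fun c : F ↦ c ^ 3 := by
  obtain ⟨k, hk⟩ : ∃ k, Fintype.card F = 3 * k + 2 := ⟨Fintype.card F / 3, by omega⟩
  have pow_card (c : F) : c ^ (3 * k + 2) = c := hk ▸ FiniteField.pow_card c
  refine Function.LeftInverse.injective (g := fun c ↦ c ^ (2 * k + 1)) fun c ↦ ?_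
  calc (c ^ 3) ^ (2 * k + 1) = c ^ (3 * k + 2) * c ^ (3 * k + 1) := by ring
    _ = c * c ^ (3 * k + 1) := by rw [pow_card]
    _ = c ^ (3 * k + 2) := by ring
    _ = c := pow_card c

theorem three_ne_zero_of_card_mod_three_eq_two (hF : Fintype.card F % 3 = 2) : (3 : F) ≠ 0 := by
  intro h3
  obtain ⟨k, hk⟩ : ∃ k, Fintype.card F = 3 * k + 2 := ⟨Fintype.card F / 3, by omega⟩
  have card_eq_zero : (3 * k + 2 : F) = 0 := by
    exact_mod_cast hk ▸ FiniteField.cast_card_eq_zero F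
  exact one_ne_zero (α := F) (by linear_combination (k + 1) * h3 - card_eq_zero)

theorem eq_zero_of_sq_add_mul_add_sq_eq_zero_s8 (hF : Fintype.card F % 3 = 2) {s t : F}
    (h : s ^ 2 + s * t + t ^ 2 = 0) : s = 0 ∧ t = 0 := by
  obtain rfl : s = t := pow_three_injective_of_card_mod_three_eq_two hF
    (show s ^ 3 = t ^ 3 by linear_combination (s - t) * h)
  have hs : 3 * s ^ 2 = 0 := by linear_combination h
  simpa [three_ne_zero_of_card_mod_three_eq_two hF] using hs

end FiniteField

theorem dvd_of_dvd_sq_add_mul_add_sq {p : ℕ} (hp : p.Prime) (hp3 : p % 3 = 2) {a b : ℤ}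
    (h : (p : ℤ) ∣ a ^ 2 + a * b + b ^ 2) : (p : ℤ) ∣ a ∧ (p : ℤ) ∣ b := by
  have : Fact p.Prime := ⟨hp⟩
  simp only [← ZMod.intCast_zmod_eq_zero_iff_dvd] at h ⊢
  push_cast at h
  exact eq_zero_of_sq_add_mul_add_sq_eq_zero_s8 (by rwa [ZMod.card]) h

theorem exists_prime_mod_three_eq_two_dvd {n : ℕ} (hn : n % 3 = 2) :
    ∃ p : ℕ, p.Prime ∧ p % 3 = 2 ∧ p ∣ n := by
  induction n using induction_on_primes with
  | zero => simp at hn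
  | one => simp at hn
  | prime_mul q m hq ih =>
    by_cases hq3 : q % 3 = 2
    · exact ⟨q, hq, hq3, dvd_mul_right q m⟩
    · have hm : m % 3 = 2 := by
        rw [Nat.mul_mod] at hn
        have : q % 3 = 0 ∨ q % 3 = 1 := by omega
        rcases this with h | h <;> rw [h] at hn <;> omega
      obtain ⟨p, hp, hp3, hpm⟩ := ih hm
      exact ⟨p, hp, hp3, hpm.mul_left q⟩

theorem exists_common_prime_of_mul_eq_sq_add_mul_add_sq {u w : ℕ} {a b : ℤ} (hu : u % 3 = 2)
    (h : (u : ℤ) * w = a ^ 2 + a * b + b ^ 2) :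
    ∃ p : ℕ, p.Prime ∧ p % 3 = 2 ∧ p ∣ u ∧ p ∣ w := by
  induction u using Nat.strong_induction_on generalizing a b with
  | _ u ih =>
    obtain ⟨p, hp, hp3, hpu⟩ := exists_prime_mod_three_eq_two_dvd hu
    by_cases hpw : p ∣ w
    · exact ⟨p, hp, hp3, hpu, hpw⟩
    have hpN : (p : ℤ) ∣ a ^ 2 + a * b + b ^ 2 := h ▸ (Int.natCast_dvd_natCast.2 hpu).mul_right _
    obtain ⟨⟨c, rfl⟩, ⟨d, rfl⟩⟩ := dvd_of_dvd_sq_add_mul_add_sq hp hp3 hpN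
    have hsq : p ^ 2 ∣ u * w := by
      zify
      exact ⟨c ^ 2 + c * d + d ^ 2, by rw [h]; ring⟩
    obtain ⟨v, rfl⟩ :=
      (((Nat.Prime.coprime_iff_not_dvd hp).2 hpw).pow_left 2).dvd_of_dvd_mul_right hsq
    have hv : v % 3 = 2 := by simpa [Nat.mul_mod, Nat.pow_mod, hp3] using hu
    have hlt : v < p ^ 2 * v :=
      lt_mul_of_one_lt_left (by omega) (Nat.one_lt_pow two_ne_zero hp.one_lt)
    have hvw : (v : ℤ) * w = c ^ 2 + c * d + d ^ 2 := by
      have hp0 : (p : ℤ) ^ 2 ≠ 0 := pow_ne_zero 2 (mod_cast hp.ne_zero)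
      apply mul_left_cancel₀ hp0
      push_cast at h
      linear_combination h
    obtain ⟨q, hq, hq3, hqv, hqw⟩ := ih v hlt hv hvw
    exact ⟨q, hq, hq3, hqv.mul_left _, hqw⟩

theorem exists_mul_eq_of_sum_three_sq_eq {ℓ X Y Z : ℤ} (hℓ : ℓ % 4 = 3) (hX : X % 4 = 1)
    (hXY : X ≡ Y [ZMOD 12]) (hYZ : Y ≡ Z [ZMOD 12]) (h : X ^ 2 + Y ^ 2 + Z ^ 2 = 3 * ℓ ^ 2) :
    ∃ u w a b : ℤ, u * w = a ^ 2 + a * b + b ^ 2 ∧ ℓ = u + 8 * w ∧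
      X = 8 * w - u + 4 * (2 * a + b) ∧ Y = 8 * w - u + 4 * (b - a) ∧
      Z = 8 * w - u - 4 * (a + 2 * b) := by
  obtain ⟨a, ha⟩ : ∃ a, X - Y = 12 * a := hXY.symm.dvd
  obtain ⟨b, hb⟩ : ∃ b, Y - Z = 12 * b := hYZ.symm.dvd
  obtain ⟨u, hu⟩ : ∃ u, 3 * ℓ - (X + Y + Z) = 6 * u := ⟨(3 * ℓ - (X + Y + Z)) / 6, by omega⟩
  obtain ⟨v, hv⟩ : ∃ v, 3 * ℓ + (X + Y + Z) = 6 * v := ⟨(3 * ℓ + (X + Y + Z)) / 6, by omega⟩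
  have huv : u * v = 2 ^ 3 * (a ^ 2 + a * b + b ^ 2) := by
    obtain rfl : X = Z + 12 * b + 12 * a := by linarith
    obtain rfl : Y = Z + 12 * b := by linarith
    obtain rfl : ℓ = u + v := by linarith
    obtain rfl : Z = v - u - 4 * (a + 2 * b) := by linarith
    linarith
  have hcoprime : IsCoprime (2 ^ 3) u := IsCoprime.pow_left ⟨-(u / 2), 1, by omega⟩
  obtain ⟨w, rfl⟩ := hcoprime.dvd_of_dvd_mul_left ⟨_, huv⟩
  exact ⟨u, w, a, b, by linarith, by linarith, by linarith, by linarith, by linarith⟩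

theorem mod_three_eq_two_or_of_mul_eq_sq_add_mul_add_sq {u w a b : ℤ}
    (h : u * w = a ^ 2 + a * b + b ^ 2) (hadd : (u - w) % 3 = 1)
    (hsub : (2 * w - u + (2 * a + b)) % 3 = 1) : u % 3 = 2 ∨ w % 3 = 2 := by
  by_contra! hne
  obtain ⟨k, rfl⟩ : (3 : ℤ) ∣ w := by omega
  have hsq : (3 : ℤ) ∣ (a - b) ^ 2 := ⟨u * k - a * b, by linear_combination -h⟩
  have hab : (3 : ℤ) ∣ a - b := Int.prime_three.dvd_of_dvd_pow hsq
  omega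

theorem no_solution_one_mod_twelve_general {ℓ : ℕ} (h12 : ℓ % 12 = 7) {X Y Z : ℤ}
    (hX : X % 12 = 1) (hY : Y % 12 = 1) (hZ : Z % 12 = 1)
    (h : X ^ 2 + Y ^ 2 + Z ^ 2 = 3 * (ℓ : ℤ) ^ 2) :
    ∃ p : ℕ, p.Prime ∧ p % 3 = 2 ∧ p ∣ ℓ ∧ (p : ℤ) ∣ X ∧ (p : ℤ) ∣ Y ∧ (p : ℤ) ∣ Z := by
  obtain ⟨u, w, a, b, hN, hℓ, rfl, rfl, rfl⟩ :=
    exists_mul_eq_of_sum_three_sq_eq (by omega) (by omega) (hX.trans hY.symm) (hY.trans hZ.symm) h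
  obtain ⟨hu, hw⟩ : 0 ≤ u ∧ 0 ≤ w := by
    have : 0 ≤ u * w := hN ▸ sq_add_mul_add_sq_nonneg a b
    rcases mul_nonneg_iff.1 this with h | h <;> omega
  lift u to ℕ using hu
  lift w to ℕ using hw
  obtain ⟨p, hp, hp3, hpu, hpw⟩ : ∃ p : ℕ, p.Prime ∧ p % 3 = 2 ∧ p ∣ u ∧ p ∣ w := by
    rcases mod_three_eq_two_or_of_mul_eq_sq_add_mul_add_sq hN (by omega) (by omega) with hu | hw
    · exact exists_common_prime_of_mul_eq_sq_add_mul_add_sq (by omega) hN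
    · obtain ⟨p, hp, hp3, hpw, hpu⟩ :=
        exists_common_prime_of_mul_eq_sq_add_mul_add_sq (by omega) (mul_comm (u : ℤ) w ▸ hN)
      exact ⟨p, hp, hp3, hpu, hpw⟩
  have hpu' : (p : ℤ) ∣ u := Int.natCast_dvd_natCast.2 hpu
  obtain ⟨ha, hb⟩ := dvd_of_dvd_sq_add_mul_add_sq hp hp3 (hN ▸ hpu'.mul_right w)
  have hsub : (p : ℤ) ∣ 8 * w - u := dvd_sub ((Int.natCast_dvd_natCast.2 hpw).mul_left 8) hpu'
  refine ⟨p, hp, hp3, ?_, dvd_add hsub (((ha.mul_left 2).add hb).mul_left 4),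
    dvd_add hsub ((dvd_sub hb ha).mul_left 4), dvd_sub hsub ((ha.add (hb.mul_left 2)).mul_left 4)⟩
  have hℓ' : ℓ = u + 8 * w := mod_cast hℓ
  exact hℓ' ▸ hpu.add (hpw.mul_left 8)

theorem no_solution_one_mod_twelve (ℓ : ℕ) (hℓ : ℓ.Prime) (h12 : ℓ % 12 = 7) :
    ¬ ∃ X Y Z : ℤ, X % 12 = 1 ∧ Y % 12 = 1 ∧ Z % 12 = 1 ∧
      X ^ 2 + Y ^ 2 + Z ^ 2 = 3 * (ℓ : ℤ) ^ 2 := by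
  rintro ⟨X, Y, Z, hX, hY, hZ, h⟩
  obtain ⟨p, hp, hp3, hpℓ, -⟩ := no_solution_one_mod_twelve_general h12 hX hY hZ h
  have : p = ℓ := (Nat.prime_dvd_prime_iff_eq hp hℓ).1 hpℓ
  omega
end

section
/- For every positive integer N, one has A(N) + 3·C(N) − B(N) − 3·D(N) = −u(N), where u(N) = r if N = 3r² for an integer r with r ≡ 1 (mod 4) (such an r is unique if it exists), and u(N) = 0 if no such integer r exists. -/
/-- `tripleCount N a b c` is the number of ordered triples `(X, Y, Z) ∈ ℤ³` with
`X² + Y² + Z² = N` and `X ≡ a, Y ≡ b, Z ≡ c (mod 12)`. -/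
noncomputable def tripleCount (N : ℕ) (a b c : ℤ) : ℕ :=
  Set.ncard {t : ℤ × ℤ × ℤ | t.1 ^ 2 + t.2.1 ^ 2 + t.2.2 ^ 2 = (N : ℤ) ∧
    t.1 % 12 = a ∧ t.2.1 % 12 = b ∧ t.2.2 % 12 = c}

/-!
Weighting an integer `x` by `+1` if `x ≡ 1 (mod 12)` and by `-1` if `x ≡ 5 (mod 12)`, Euler's
pentagonal number theorem says that `η(24τ) = ∑ x, ε(x) q ^ (x ^ 2)`. Expanding the cube of this
theta series, `A + 3C - B - 3D` is minus the coefficient of `q ^ N` in `η(24τ) ^ 3`, which Jacobi's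
identity `η(24τ) ^ 3 = ∑ r q ^ (3 * r ^ 2)`, over the integers `r ≡ 1 (mod 4)`, evaluates.

Jacobi's identity is the derivative at `z = 1` of the triple product. The coefficients of the finite
triple product satisfy a linear recurrence in the number of factors; since their weights `2 * k + 1`
are linear in `k`, it telescopes and gives a finite form of the identity in any commutative ring.
Modulo `X ^ M` the variable is nilpotent, and there the finite form already is the limiting one.
-/

open Finset

section TriangularNumbers

theorem succ_choose_two (k : ℕ) : (k + 1).choose 2 = k + k.choose 2 := by
  rw [Nat.choose_succ_succ' k 1, Nat.choose_one_right]

theorem le_succ_choose_two (k : ℕ) : k ≤ (k + 1).choose 2 :=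
  succ_choose_two k ▸ k.le_add_right _

theorem injective_succ_choose_two : Function.Injective fun k : ℕ ↦ (k + 1).choose 2 :=
  StrictMono.injective <| strictMono_nat_of_lt_succ fun k ↦ by
    have := succ_choose_two (k + 1)
    lia

theorem eight_mul_succ_choose_two_add_one (k : ℕ) :
    8 * (k + 1).choose 2 + 1 = (2 * k + 1) ^ 2 := by
  induction k with
  | zero => simp
  | succ k ih =>
    rw [succ_choose_two]
    linear_combination ih

theorem neg_one_pow_mul_two_mul_add_one_sq (k : ℕ) :
    ((-1 : ℤ) ^ k * (2 * k + 1)) ^ 2 = 8 * (k + 1).choose 2 + 1 := by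
  rw [mul_pow, ← pow_mul, (even_two.mul_left k).neg_one_pow, one_mul]
  exact_mod_cast (eight_mul_succ_choose_two_add_one k).symm

end TriangularNumbers

section GaussianBinomial

variable {R : Type*} [CommRing R] (q : R)

/-- The `q`-Pochhammer symbol `(q; q)_n = (1 - q)(1 - q ^ 2) ⋯ (1 - q ^ n)`. -/
def qPochhammer (n : ℕ) : R := ∏ i ∈ range n, (1 - q ^ (i + 1))

/-- The Gaussian binomial coefficient `[n choose k]_q`, defined by the `q`-Pascal rule so that no
division is needed; like `Nat.choose`, it vanishes for `n < k`. -/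
def gaussBinom : ℕ → ℕ → R
  | _, 0 => 1
  | 0, _ + 1 => 0
  | n + 1, k + 1 => gaussBinom n k + q ^ (k + 1) * gaussBinom n (k + 1)

theorem qPochhammer_succ (n : ℕ) :
    qPochhammer q (n + 1) = qPochhammer q n * (1 - q ^ (n + 1)) :=
  prod_range_succ _ _

@[simp]
theorem gaussBinom_zero_right (n : ℕ) : gaussBinom q n 0 = 1 := by
  cases n <;> rfl

theorem gaussBinom_succ_succ (n k : ℕ) :
    gaussBinom q (n + 1) (k + 1) = gaussBinom q n k + q ^ (k + 1) * gaussBinom q n (k + 1) := rfl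

theorem gaussBinom_eq_zero_of_lt {n k : ℕ} (h : n < k) : gaussBinom q n k = 0 := by
  induction n generalizing k with
  | zero => obtain ⟨k, rfl⟩ := Nat.exists_eq_succ_of_ne_zero h.ne'; rfl
  | succ n ih =>
    obtain ⟨k, rfl⟩ := Nat.exists_eq_succ_of_ne_zero (Nat.ne_zero_of_lt h)
    rw [Nat.succ_eq_add_one, gaussBinom_succ_succ, ih (by lia), ih (by lia), mul_zero, add_zero]

@[simp]
theorem gaussBinom_self (n : ℕ) : gaussBinom q n n = 1 := by
  induction n with
  | zero => rfl
  | succ n ih =>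
    rw [gaussBinom_succ_succ, ih, gaussBinom_eq_zero_of_lt q n.lt_succ_self, mul_zero, add_zero]

theorem gaussBinom_add_succ_succ (j l : ℕ) :
    gaussBinom q (j + l + 1) (j + 1) =
      q ^ l * gaussBinom q (j + l) j + gaussBinom q (j + l) (j + 1) := by
  match j, l with
  | 0, 0 => simp [gaussBinom]
  | j + 1, 0 => simp [gaussBinom_eq_zero_of_lt]
  | 0, l + 1 =>
    have ih := gaussBinom_add_succ_succ 0 l
    have hpascal := gaussBinom_succ_succ q l 0
    simp only [zero_add, gaussBinom_zero_right, gaussBinom_succ_succ q (l + 1)] at *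
    linear_combination q * ih - hpascal
  | j + 1, l + 1 =>
    have ih₁ := gaussBinom_add_succ_succ j (l + 1)
    have ih₂ := gaussBinom_add_succ_succ (j + 1) l
    have hpascal₁ := gaussBinom_succ_succ q (j + (l + 1)) j
    have hpascal₂ := gaussBinom_succ_succ q (j + (l + 1)) (j + 1)
    rw [gaussBinom_succ_succ]
    rw [show j + 1 + l = j + (l + 1) by ring] at ih₂
    rw [show j + 1 + (l + 1) = j + (l + 1) + 1 by ring]
    linear_combination ih₁ + q ^ (j + 2) * ih₂ - q ^ (l + 1) * hpascal₁ - hpascal₂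

theorem gaussBinom_symm_add (j l : ℕ) : gaussBinom q (j + l) j = gaussBinom q (j + l) l := by
  match j, l with
  | 0, l => simp
  | j, 0 => simp
  | j + 1, l + 1 =>
    have ih₁ := gaussBinom_symm_add j (l + 1)
    have ih₂ := gaussBinom_symm_add (j + 1) l
    have hpascal := gaussBinom_add_succ_succ q l (j + 1)
    rw [show j + 1 + l = j + (l + 1) by ring] at ih₂
    rw [show l + (j + 1) = j + (l + 1) by ring] at hpascal
    rw [show j + 1 + (l + 1) = j + (l + 1) + 1 by ring, hpascal, gaussBinom_succ_succ, ih₁, ih₂,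
      add_comm]

theorem one_sub_pow_mul_gaussBinom (j l : ℕ) :
    (1 - q ^ (j + 1)) * gaussBinom q (j + l + 1) (j + 1) =
      (1 - q ^ (j + l + 1)) * gaussBinom q (j + l) j := by
  linear_combination gaussBinom_succ_succ q (j + l) j -
    q ^ (j + 1) * gaussBinom_add_succ_succ q j l

theorem gaussBinom_mul_qPochhammer_mul_qPochhammer (j l : ℕ) :
    gaussBinom q (j + l) j * qPochhammer q j * qPochhammer q l = qPochhammer q (j + l) := by
  induction j with
  | zero => simp [qPochhammer]
  | succ j ih =>
    rw [show j + 1 + l = j + l + 1 by ring, qPochhammer_succ, qPochhammer_succ, ← ih]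
    linear_combination qPochhammer q j * qPochhammer q l * one_sub_pow_mul_gaussBinom q j l

theorem gaussBinom_three_term (j l : ℕ) :
    gaussBinom q (j + l + 2) (j + 2) = q ^ l * gaussBinom q (j + l) j +
      (1 + q ^ (j + l + 1)) * gaussBinom q (j + l) (j + 1) +
      q ^ (j + 2) * gaussBinom q (j + l) (j + 2) := by
  rw [gaussBinom_succ_succ, gaussBinom_add_succ_succ]
  cases l with
  | zero => simp [gaussBinom_eq_zero_of_lt]
  | succ l =>
    rw [show j + (l + 1) + 1 = j + 1 + l + 1 by ring, gaussBinom_add_succ_succ]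
    ring_nf

/-- The coefficient of `z ^ k` in the finite triple product
`∏ i < L + 1, (1 - z * q ^ i) * ∏ i < L, (1 - z⁻¹ * q ^ (i + 1))`
for `k ≥ 0`. -/
def tripleProductCoeff (L k : ℕ) : R :=
  (-1) ^ k * q ^ k.choose 2 * gaussBinom q (2 * L + 1) (L + k)

theorem tripleProductCoeff_eq_zero {L k : ℕ} (h : L + 1 < k) : tripleProductCoeff q L k = 0 := by
  rw [tripleProductCoeff, gaussBinom_eq_zero_of_lt q (by lia), mul_zero]

theorem tripleProductCoeff_zero_add_one (L : ℕ) :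
    tripleProductCoeff q L 0 + tripleProductCoeff q L 1 = 0 := by
  have hsymm := gaussBinom_symm_add q L (L + 1)
  rw [show L + (L + 1) = 2 * L + 1 by ring] at hsymm
  simp [tripleProductCoeff, hsymm]

theorem tripleProductCoeff_succ_succ (L k : ℕ) :
    tripleProductCoeff q (L + 1) (k + 1) =
      (1 + q ^ (2 * (L + 1))) * tripleProductCoeff q L (k + 1) -
        q ^ (L + 1) * (tripleProductCoeff q L k + tripleProductCoeff q L (k + 2)) := by
  rcases le_or_gt k (L + 1) with hk | hk
  · obtain ⟨d, hd⟩ := Nat.exists_eq_add_of_le hk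
    have hrec := gaussBinom_three_term q (L + k) d
    have hQ : q ^ (L + 1) = q ^ k * q ^ d := by rw [hd, pow_add]
    rw [show L + k + d = 2 * L + 1 by lia] at hrec
    simp only [tripleProductCoeff, succ_choose_two, show L + 1 + (k + 1) = L + k + 2 by ring,
      show 2 * (L + 1) + 1 = 2 * L + 1 + 2 by ring, hrec, ← add_assoc]
    linear_combination (-1) ^ k * q ^ k.choose 2 * gaussBinom q (2 * L + 1) (L + k) * hQ
  · simp [tripleProductCoeff_eq_zero q (show L + 1 < k by lia),
      tripleProductCoeff_eq_zero q (show L + 1 < k + 1 by lia),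
      tripleProductCoeff_eq_zero q (show L + 1 < k + 2 by lia),
      tripleProductCoeff_eq_zero q (show L + 1 + 1 < k + 1 by lia)]

theorem sum_mul_tripleProductCoeff (L : ℕ) :
    ∑ k ∈ range (L + 1), (2 * k + 1) * tripleProductCoeff q L (k + 1) = -qPochhammer q L ^ 2 := by
  induction L with
  | zero => simp [tripleProductCoeff, qPochhammer]
  | succ L ih =>
    have hzero := tripleProductCoeff_eq_zero q (show L + 1 < L + 2 by lia)
    have hzero' := tripleProductCoeff_eq_zero q (show L + 1 < L + 3 by lia)
    let g (k : ℕ) : R := q ^ (L + 1) *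
      ((2 * k + 1) * tripleProductCoeff q L k - (2 * k - 1) * tripleProductCoeff q L (k + 1))
    calc ∑ k ∈ range (L + 2), (2 * k + 1) * tripleProductCoeff q (L + 1) (k + 1)
      _ = ∑ k ∈ range (L + 2), ((1 - q ^ (L + 1)) ^ 2 *
            ((2 * k + 1) * tripleProductCoeff q L (k + 1)) + (g (k + 1) - g k)) := by
        refine sum_congr rfl fun k _ ↦ ?_
        simp only [g, tripleProductCoeff_succ_succ]
        push_cast
        ring
      _ = (1 - q ^ (L + 1)) ^ 2 *
            ∑ k ∈ range (L + 1), (2 * k + 1) * tripleProductCoeff q L (k + 1) := by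
        have hg : g (L + 2) = g 0 := by
          simp only [g, hzero, hzero']
          push_cast
          linear_combination -q ^ (L + 1) * tripleProductCoeff_zero_add_one q L
        rw [sum_add_distrib, sum_range_sub, hg, sub_self, add_zero, ← mul_sum,
          sum_range_succ _ (L + 1), hzero, mul_zero, add_zero]
      _ = -qPochhammer q (L + 1) ^ 2 := by
        rw [ih, qPochhammer_succ]
        ring

section Nilpotent

variable {q} {M : ℕ}

theorem qPochhammer_eq_of_pow_eq_zero (hq : q ^ M = 0) {l : ℕ} (hl : M ≤ l) :
    qPochhammer q l = qPochhammer q M := by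
  induction l, hl using Nat.le_induction with
  | base => rfl
  | succ l hl ih =>
    rw [qPochhammer_succ, pow_eq_zero_of_le (hl.trans l.le_succ) hq, sub_zero, mul_one, ih]

theorem isUnit_qPochhammer_of_pow_eq_zero (hq : q ^ M = 0) (n : ℕ) : IsUnit (qPochhammer q n) := by
  refine IsUnit.prod_iff.mpr fun i _ ↦ IsNilpotent.isUnit_one_sub ?_
  exact IsNilpotent.pow_succ i ⟨M, hq⟩

theorem gaussBinom_mul_qPochhammer_of_pow_eq_zero (hq : q ^ M = 0) {j l : ℕ} (hj : M ≤ j)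
    (hl : M ≤ l) :
    gaussBinom q (j + l) j * qPochhammer q M = 1 := by
  have h := gaussBinom_mul_qPochhammer_mul_qPochhammer q j l
  rw [qPochhammer_eq_of_pow_eq_zero hq hj, qPochhammer_eq_of_pow_eq_zero hq hl,
    qPochhammer_eq_of_pow_eq_zero hq (hj.trans (j.le_add_right l))] at h
  exact (isUnit_qPochhammer_of_pow_eq_zero hq M).mul_eq_right.mp h

theorem qPochhammer_pow_three_of_pow_eq_zero (hq : q ^ M = 0) :
    qPochhammer q M ^ 3 = ∑ k ∈ range M, (-1) ^ k * (2 * k + 1) * q ^ (k + 1).choose 2 := by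
  have hterm (k : ℕ) :
      -((2 * k + 1) * tripleProductCoeff q (2 * M) (k + 1) * qPochhammer q M) =
        (-1) ^ k * (2 * k + 1) * q ^ (k + 1).choose 2 := by
    rcases lt_or_ge k M with hk | hk
    · have hinv := gaussBinom_mul_qPochhammer_of_pow_eq_zero hq (j := 2 * M + (k + 1))
        (l := 2 * M - k) (by lia) (by lia)
      rw [show 2 * M + (k + 1) + (2 * M - k) = 2 * (2 * M) + 1 by lia] at hinv
      rw [tripleProductCoeff]
      linear_combination (-1) ^ k * (2 * k + 1) * q ^ (k + 1).choose 2 * hinv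
    · rw [tripleProductCoeff, pow_eq_zero_of_le (hk.trans (le_succ_choose_two k)) hq]
      ring
  calc qPochhammer q M ^ 3 = qPochhammer q (2 * M) ^ 2 * qPochhammer q M := by
        rw [qPochhammer_eq_of_pow_eq_zero hq (l := 2 * M) (by lia), ← pow_succ]
    _ = ∑ k ∈ range (2 * M + 1), (-1) ^ k * (2 * k + 1) * q ^ (k + 1).choose 2 := by
        rw [← neg_neg (qPochhammer q (2 * M) ^ 2), ← sum_mul_tripleProductCoeff, neg_mul, sum_mul,
          ← sum_neg_distrib]
        exact sum_congr rfl fun k _ ↦ hterm k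
    _ = ∑ k ∈ range M, (-1) ^ k * (2 * k + 1) * q ^ (k + 1).choose 2 := by
        refine (sum_subset (range_subset_range.mpr (by lia)) fun k _ hk ↦ ?_).symm
        rw [pow_eq_zero_of_le ((not_lt.mp (mem_range.not.mp hk)).trans (le_succ_choose_two k)) hq,
          mul_zero]

end Nilpotent

end GaussianBinomial

section PowerSeries

open PowerSeries

theorem coeff_pow_eq_of_coeff_eq {R : Type*} [CommSemiring R] {f g : R⟦X⟧} {n : ℕ}
    (h : ∀ m ≤ n, coeff m f = coeff m g) (d : ℕ) : coeff n (f ^ d) = coeff n (g ^ d) := by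
  have htrunc : trunc (n + 1) f = trunc (n + 1) g := by
    ext m
    simp only [coeff_trunc]
    split_ifs with hm
    · exact h m (Nat.le_of_lt_succ hm)
    · rfl
  rw [← coeff_coe_trunc_of_lt n.lt_succ_self, ← trunc_trunc_pow, htrunc, trunc_trunc_pow,
    coeff_coe_trunc_of_lt n.lt_succ_self]

variable {R : Type*} [CommRing R]

theorem mk_span_X_pow_eq_mk_iff {M : ℕ} {f g : R⟦X⟧} :
    Ideal.Quotient.mk (Ideal.span {(X : R⟦X⟧) ^ M}) f = Ideal.Quotient.mk _ g ↔
      ∀ m < M, coeff m f = coeff m g := by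
  simp only [Ideal.Quotient.mk_eq_mk_iff_sub_mem, Ideal.mem_span_singleton, X_pow_dvd_iff,
    map_sub, sub_eq_zero]

theorem map_qPochhammer {S : Type*} [CommRing S] (φ : R →+* S) (q : R) (n : ℕ) :
    φ (qPochhammer q n) = qPochhammer (φ q) n := by
  simp [qPochhammer]

theorem mk_span_X_pow_X_pow (M : ℕ) :
    Ideal.Quotient.mk (Ideal.span {(X : R⟦X⟧) ^ M}) X ^ M = 0 := by
  rw [← map_pow, Ideal.Quotient.eq_zero_iff_mem]
  exact Ideal.mem_span_singleton_self _

theorem coeff_qPochhammer_X {m n : ℕ} (h : m < n) :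
    coeff m (qPochhammer (X : R⟦X⟧) n) = coeff m (pentagonalSeries R) := by
  obtain ⟨l, hcoeff, hl⟩ := ((Filter.tendsto_finset_range.eventually
    (coeff_prod_one_sub_X_pow_eventually_eq R m)).and (Filter.eventually_ge_atTop n)).exists
  rw [← hcoeff, ← qPochhammer]
  refine mk_span_X_pow_eq_mk_iff.mp ?_ m h
  rw [map_qPochhammer, map_qPochhammer,
    qPochhammer_eq_of_pow_eq_zero (mk_span_X_pow_X_pow n) hl]

theorem coeff_pentagonalSeries_pow_three (n : ℕ) :
    coeff n (pentagonalSeries R ^ 3) =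
      ∑ k ∈ range (n + 1), if (k + 1).choose 2 = n then (-1 : R) ^ k * (2 * k + 1) else 0 := by
  have hjacobi : Ideal.Quotient.mk (Ideal.span {(X : R⟦X⟧) ^ (n + 1)})
      (qPochhammer X (n + 1) ^ 3) = Ideal.Quotient.mk _
        (∑ k ∈ range (n + 1), C ((-1 : R) ^ k * (2 * k + 1)) * X ^ (k + 1).choose 2) := by
    rw [map_pow, map_qPochhammer, qPochhammer_pow_three_of_pow_eq_zero (mk_span_X_pow_X_pow _)]
    simp only [map_sum, map_mul, map_add, map_pow, map_neg, map_one, map_natCast, map_ofNat]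
  calc coeff n (pentagonalSeries R ^ 3)
    _ = coeff n (qPochhammer X (n + 1) ^ 3) :=
      coeff_pow_eq_of_coeff_eq (fun m hm ↦ (coeff_qPochhammer_X (Nat.lt_succ_of_le hm)).symm) 3
    _ = ∑ k ∈ range (n + 1), if (k + 1).choose 2 = n then (-1 : R) ^ k * (2 * k + 1) else 0 := by
      rw [mk_span_X_pow_eq_mk_iff.mp hjacobi n n.lt_succ_self, map_sum]
      simp only [coeff_C_mul, coeff_X_pow, mul_ite, mul_one, mul_zero, eq_comm]

theorem coeff_pentagonalSeries_pow_three_succ_choose_two (k : ℕ) :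
    coeff ((k + 1).choose 2) (pentagonalSeries R ^ 3) = (-1 : R) ^ k * (2 * k + 1) := by
  rw [coeff_pentagonalSeries_pow_three, sum_eq_single_of_mem k
    (mem_range_succ_iff.mpr (le_succ_choose_two k))
    fun j _ hj ↦ if_neg (injective_succ_choose_two.ne hj), if_pos rfl]

theorem coeff_pentagonalSeries_pow_three_eq_zero {n : ℕ} (h : ∀ k : ℕ, (k + 1).choose 2 ≠ n) :
    coeff n (pentagonalSeries R ^ 3) = 0 := by
  rw [coeff_pentagonalSeries_pow_three]
  exact sum_eq_zero fun k _ ↦ if_neg (h k)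

/-- The power series of `η(24τ) = q ∏ (1 - q ^ (24 * n))`. -/
noncomputable def etaSeries : ℤ⟦X⟧ := X * expand 24 (by simp) (pentagonalSeries ℤ)

theorem coeff_etaSeries_pow_three (n : ℕ) :
    coeff (24 * n + 3) (etaSeries ^ 3) = coeff n (pentagonalSeries ℤ ^ 3) := by
  rw [etaSeries, mul_pow, ← map_pow, coeff_X_pow_mul, coeff_expand_mul]

theorem coeff_etaSeries_pow_three_of_mod_ne {N : ℕ} (h : N % 24 ≠ 3) :
    coeff N (etaSeries ^ 3) = 0 := by
  rw [etaSeries, mul_pow, ← map_pow, coeff_X_pow_mul']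
  split_ifs with hN
  · exact coeff_expand_of_not_dvd _ _ _ (by lia)
  · rfl

theorem exists_neg_one_pow_mul_eq_iff {r : ℤ} :
    (∃ k : ℕ, (-1) ^ k * (2 * k + 1) = r) ↔ r % 4 = 1 := by
  constructor
  · rintro ⟨k, rfl⟩
    rcases k.even_or_odd with hk | hk <;> rw [hk.neg_one_pow] <;> grind
  · intro hr
    rcases le_or_gt 0 r with h | h
    · refine ⟨(r / 2).toNat, ?_⟩
      rw [Even.neg_one_pow (Nat.even_iff.mpr (by lia))]
      lia
    · refine ⟨(-r / 2).toNat, ?_⟩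
      rw [Odd.neg_one_pow (Nat.odd_iff.mpr (by lia))]
      lia

theorem coeff_etaSeries_pow_three_of_eq {N : ℕ} {r : ℤ} (hr : r % 4 = 1)
    (hN : (N : ℤ) = 3 * r ^ 2) : coeff N (etaSeries ^ 3) = r := by
  obtain ⟨k, rfl⟩ := exists_neg_one_pow_mul_eq_iff.mpr hr
  obtain rfl : N = 24 * (k + 1).choose 2 + 3 := by
    rw [neg_one_pow_mul_two_mul_add_one_sq] at hN
    lia
  rw [coeff_etaSeries_pow_three, coeff_pentagonalSeries_pow_three_succ_choose_two]

theorem coeff_etaSeries_pow_three_eq_zero {N : ℕ}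
    (h : ¬ ∃ r : ℤ, r % 4 = 1 ∧ (N : ℤ) = 3 * r ^ 2) : coeff N (etaSeries ^ 3) = 0 := by
  by_cases hN : N % 24 = 3
  · obtain ⟨n, rfl⟩ : ∃ n, N = 24 * n + 3 := ⟨N / 24, by lia⟩
    rw [coeff_etaSeries_pow_three]
    refine coeff_pentagonalSeries_pow_three_eq_zero fun k hk ↦ h ?_
    refine ⟨_, exists_neg_one_pow_mul_eq_iff.mp ⟨k, rfl⟩, ?_⟩
    rw [neg_one_pow_mul_two_mul_add_one_sq, hk]
    lia
  · exact coeff_etaSeries_pow_three_of_mod_ne hN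

/-- The coefficients in `η(24τ) = ∑ x, etaSign x * q ^ (x ^ 2)`: the support `{x | x ≡ 1, 5 mod 12}`
contains exactly one of `x` and `-x` for each `x` prime to `6`. -/
def etaSign (x : ℤ) : ℤ := (if x % 12 = 1 then 1 else 0) - if x % 12 = 5 then 1 else 0

/-- The support of `etaSign`, parametrised by the index `k` of the generalized pentagonal number
`(etaRoot k ^ 2 - 1) / 24`. -/
def etaRoot (k : ℤ) : ℤ := k.negOnePow * (1 - 6 * k)

theorem natAbs_etaRoot_sq (k : ℤ) : (etaRoot k).natAbs ^ 2 = 24 * pentagonal k + 1 := by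
  zify
  rw [sq_abs, etaRoot, mul_pow, ← Units.val_pow_eq_pow_val, Int.units_sq, Units.val_one]
  linear_combination -12 * two_mul_natCast_pentagonal k

theorem etaSign_etaRoot (k : ℤ) : etaSign (etaRoot k) = k.negOnePow := by
  rw [etaSign, etaRoot]
  rcases k.even_or_odd' with ⟨m, rfl | rfl⟩
  · rw [Int.negOnePow_even _ (even_two_mul m), Units.val_one]
    split_ifs <;> lia
  · rw [Int.negOnePow_odd _ (odd_two_mul_add_one m), Units.val_neg, Units.val_one]
    split_ifs <;> lia

theorem etaSign_ne_zero_iff {x : ℤ} : etaSign x ≠ 0 ↔ x ∈ Set.range etaRoot := by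
  constructor
  · intro hx
    simp only [Set.mem_range, etaRoot]
    have hmod : x % 12 = 1 ∨ x % 12 = 5 := by
      grind [etaSign]
    rcases hmod with h | h
    · refine ⟨(1 - x) / 6, ?_⟩
      rw [Int.negOnePow_even _ (Int.even_iff.mpr (by lia)), Units.val_one]
      lia
    · refine ⟨(1 + x) / 6, ?_⟩
      rw [Int.negOnePow_odd _ (Int.odd_iff.mpr (by lia)), Units.val_neg, Units.val_one]
      lia
  · rintro ⟨k, rfl⟩
    rw [etaSign_etaRoot]
    exact Units.ne_zero _

theorem etaSign_neg_of_ne_zero {x : ℤ} (h : etaSign x ≠ 0) : etaSign (-x) = 0 := by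
  grind [etaSign]

theorem coeff_etaSeries_natAbs_etaRoot_sq (k : ℤ) :
    coeff ((etaRoot k).natAbs ^ 2) etaSeries = etaSign (etaRoot k) := by
  rw [natAbs_etaRoot_sq, etaSeries, coeff_succ_X_mul, coeff_expand_mul,
    coeff_pentagonalSeries_pentagonal, Int.cast_id, etaSign_etaRoot]

theorem coeff_etaSeries_eq_zero {m : ℕ} (h : ∀ k, (etaRoot k).natAbs ^ 2 ≠ m) :
    coeff m etaSeries = 0 := by
  rw [etaSeries]
  rcases m with _ | m
  · exact coeff_zero_X_mul _
  · rw [coeff_succ_X_mul]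
    by_cases hm : 24 ∣ m
    · obtain ⟨n, rfl⟩ := hm
      rw [coeff_expand_mul]
      refine coeff_pentagonalSeries_eq_zero ℤ ?_
      rintro ⟨k, rfl⟩
      exact h k (natAbs_etaRoot_sq k)
    · exact coeff_expand_of_not_dvd _ _ _ hm

theorem coeff_etaSeries {N m : ℕ} (hm : m ≤ N) :
    coeff m etaSeries =
      coeff m (∑ x ∈ Icc (-N : ℤ) N, monomial (x.natAbs ^ 2) (etaSign x)) := by
  rw [map_sum]
  simp only [coeff_monomial]
  by_cases h : ∃ k, (etaRoot k).natAbs ^ 2 = m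
  · obtain ⟨k, rfl⟩ := h
    have hmem : etaRoot k ∈ Icc (-N : ℤ) N := by
      have := (Nat.le_self_pow two_ne_zero _).trans hm
      rw [mem_Icc]
      lia
    rw [coeff_etaSeries_natAbs_etaRoot_sq, sum_eq_single_of_mem _ hmem, if_pos rfl]
    intro x _ hx
    refine ite_eq_right_iff.mpr fun hsq ↦ ?_
    obtain rfl | rfl := Int.natAbs_eq_natAbs_iff.mp (Nat.pow_left_injective two_ne_zero hsq.symm)
    · exact absurd rfl hx
    · exact etaSign_neg_of_ne_zero (etaSign_ne_zero_iff.mpr ⟨k, rfl⟩)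
  · push Not at h
    rw [coeff_etaSeries_eq_zero h]
    refine (sum_eq_zero fun x _ ↦ ite_eq_right_iff.mpr fun hx ↦ ?_).symm
    by_contra hsign
    obtain ⟨k, rfl⟩ := etaSign_ne_zero_iff.mp hsign
    exact h k hx.symm

theorem coeff_sum_monomial_pow_three {ι R : Type*} [CommSemiring R] (s : Finset ι) (e : ι → ℕ)
    (a : ι → R) (n : ℕ) :
    coeff n ((∑ i ∈ s, monomial (e i) (a i)) ^ 3) =
      ∑ t ∈ s ×ˢ s ×ˢ s with e t.1 + e t.2.1 + e t.2.2 = n, a t.1 * a t.2.1 * a t.2.2 := by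
  rw [pow_three, sum_mul_sum, ← sum_product', sum_mul_sum, ← sum_product', map_sum, sum_filter]
  simp only [monomial_mul_monomial, coeff_monomial, ← mul_assoc, ← add_assoc, eq_comm]

end PowerSeries

section TripleCount

/-- The integer triples `(x, y, z)` with `x² + y² + z² = N`. The condition is stated in `ℕ` because
the squares are exponents in the theta series. -/
noncomputable def sumThreeSquaresTriples (N : ℕ) : Finset (ℤ × ℤ × ℤ) :=
  {t ∈ Icc (-N : ℤ) N ×ˢ Icc (-N : ℤ) N ×ˢ Icc (-N : ℤ) N |
    t.1.natAbs ^ 2 + t.2.1.natAbs ^ 2 + t.2.2.natAbs ^ 2 = N}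

theorem mem_sumThreeSquaresTriples {N : ℕ} {t : ℤ × ℤ × ℤ} :
    t ∈ sumThreeSquaresTriples N ↔ t.1 ^ 2 + t.2.1 ^ 2 + t.2.2 ^ 2 = (N : ℤ) := by
  have hcast : t.1.natAbs ^ 2 + t.2.1.natAbs ^ 2 + t.2.2.natAbs ^ 2 = N ↔
      t.1 ^ 2 + t.2.1 ^ 2 + t.2.2 ^ 2 = (N : ℤ) := by
    zify
    simp only [sq_abs]
  have hle (x : ℤ) : x.natAbs ≤ x.natAbs ^ 2 := Nat.le_self_pow two_ne_zero _
  simp only [sumThreeSquaresTriples, mem_filter, mem_product, mem_Icc, hcast,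
    and_iff_right_iff_imp]
  rw [← hcast]
  have hx := hle t.1
  have hy := hle t.2.1
  have hz := hle t.2.2
  lia

theorem tripleCount_eq_sum (N : ℕ) (a b c : ℤ) :
    (tripleCount N a b c : ℤ) = ∑ t ∈ sumThreeSquaresTriples N,
      (if t.1 % 12 = a then 1 else 0) * (if t.2.1 % 12 = b then 1 else 0) *
        (if t.2.2 % 12 = c then 1 else 0) := by
  have hset : {t : ℤ × ℤ × ℤ | t.1 ^ 2 + t.2.1 ^ 2 + t.2.2 ^ 2 = (N : ℤ) ∧
      t.1 % 12 = a ∧ t.2.1 % 12 = b ∧ t.2.2 % 12 = c} =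
      ({t ∈ sumThreeSquaresTriples N | t.1 % 12 = a ∧ t.2.1 % 12 = b ∧ t.2.2 % 12 = c} :
        Finset _) := by
    ext t
    simp [mem_sumThreeSquaresTriples]
  rw [tripleCount, hset, Set.ncard_coe_finset, natCast_card_filter]
  simp only [ite_and, ite_mul, one_mul, zero_mul]

theorem tripleCount_rotate (N : ℕ) (a b c : ℤ) : tripleCount N a b c = tripleCount N b c a := by
  refine Set.ncard_congr (fun t _ ↦ (t.2.1, t.2.2, t.1)) ?_ ?_ ?_
  · rintro t ⟨h, ha, hb, hc⟩
    exact ⟨by linarith, hb, hc, ha⟩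
  · rintro ⟨x, y, z⟩ ⟨x', y', z'⟩ _ _ h
    grind
  · rintro ⟨y, z, x⟩ ⟨h, hb, hc, ha⟩
    exact ⟨(x, y, z), ⟨by dsimp only at *; linarith, ha, hb, hc⟩, rfl⟩

theorem coeff_etaSeries_pow_three_eq_sum (N : ℕ) :
    PowerSeries.coeff N (etaSeries ^ 3) =
      ∑ t ∈ sumThreeSquaresTriples N, etaSign t.1 * etaSign t.2.1 * etaSign t.2.2 := by
  rw [coeff_pow_eq_of_coeff_eq (fun _ ↦ coeff_etaSeries) 3, coeff_sum_monomial_pow_three,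
    sumThreeSquaresTriples]

theorem tripleCount_combination_eq_neg_coeff (N : ℕ) :
    (tripleCount N 5 5 5 : ℤ) + 3 * tripleCount N 5 1 1 - tripleCount N 1 1 1
      - 3 * tripleCount N 1 5 5 = -PowerSeries.coeff N (etaSeries ^ 3) := by
  have hexpand : PowerSeries.coeff N (etaSeries ^ 3) =
      (tripleCount N 1 1 1 - tripleCount N 1 1 5 - tripleCount N 1 5 1 - tripleCount N 5 1 1 +
        tripleCount N 1 5 5 + tripleCount N 5 1 5 + tripleCount N 5 5 1 - tripleCount N 5 5 5 :
          ℤ) := by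
    simp only [coeff_etaSeries_pow_three_eq_sum, tripleCount_eq_sum, ← sum_sub_distrib,
      ← sum_add_distrib, etaSign]
    exact sum_congr rfl fun t _ ↦ by ring
  rw [hexpand, tripleCount_rotate N 1 1 5, tripleCount_rotate N 1 5 1, tripleCount_rotate N 5 5 1,
    tripleCount_rotate N 5 1 5]
  ring

end TripleCount

theorem spinor_theta_coefficient_identity (N : ℕ) (hN : 0 < N) (u : ℤ)
    (hu : (∃ r : ℤ, r % 4 = 1 ∧ (N : ℤ) = 3 * r ^ 2 ∧ u = r) ∨
      ((¬ ∃ r : ℤ, r % 4 = 1 ∧ (N : ℤ) = 3 * r ^ 2) ∧ u = 0)) :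
    (tripleCount N 5 5 5 : ℤ) + 3 * tripleCount N 5 1 1
      - tripleCount N 1 1 1 - 3 * tripleCount N 1 5 5 = -u := by
  rw [tripleCount_combination_eq_neg_coeff, neg_inj]
  rcases hu with ⟨r, hr, hNr, rfl⟩ | ⟨hno, rfl⟩
  · exact coeff_etaSeries_pow_three_of_eq hr hNr
  · exact coeff_etaSeries_pow_three_eq_zero hno
end
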